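/- There exist effectively computable constants c > 0 and N > 0 such that for all integers n > N and all integers l with 0 ≤ l ≤ n/(10·log n), one has |a(n,l) − (l+1)^{l+n−1}/(l+1)!| ≤ ((l+1)^{l+n−1}/(l+1)!)·exp(−n/(l+1) + 6.5·log n + c). -/

import Mathlib

/-!
Write `T k = (k+1)^(k+n-1)/(k+1)!`. The term `k = l` of `a n l` is exactly `T l`, so the error is
the sum of the terms with `k < l`, and crude estimates suffice for those. Put `r = l - k`.

* Each `C(n,k,i)` is at most `(11 n²)^i` in absolute value (`abs_Cnki_le`), and the weighted number
  of compositions of `r` is at most `∑ r^m/m! ≤ e^r`, so the inner sum is at most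
  `(33 n²)^r ≤ n^(3r)` (`abs_inner_le`).
* `T k ≤ T l * exp(-(n-1)/(l+1))^r`, from `1 - x ≤ exp(-x)` applied to
  `(k+1)/(l+1) = 1 - r/(l+1)` and from `(l+1)! ≤ (k+1)! (l+1)^r` (`leading_le`).

Hence the error is at most `T l * ∑_{r=1}^{l} q^r` with `q = exp(-(n-1)/(l+1) + 3 log n)`.
The hypothesis on `l` gives `q ≤ 1`, so the sum is at most `l q ≤ n q`, which is at most
`exp(-n/(l+1) + 4 log n + 1)`.
-/

open Finset Real

/-- The constant `C(n,k,i)` from Aluffi–Marcolli–Nascimento. -/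
noncomputable def Cnki (n k i : ℕ) : ℝ :=
  ((-1 : ℝ) ^ i * (2 * (k : ℝ) * i + n * i + k + n - 1) + (k : ℝ) - i) / (i * (i + 1))
    - (1 / ((i : ℝ) * (k + 1) ^ i)) * ∑ j ∈ Finset.range (k + n - 1), (j : ℝ) ^ i

/-- The finite set of `m`-tuples of positive integers summing to `N`. -/
def posTuples (m N : ℕ) : Finset (Fin m → ℕ) :=
  (Fintype.piFinset fun _ => Finset.Icc 1 N).filter fun f => ∑ j, f j = N

/-- `a n l = rk H^{2l}(M̄_{0,n})`, via the Aluffi–Marcolli–Nascimento formula. -/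
noncomputable def a (n l : ℕ) : ℝ :=
  ∑ k ∈ Finset.range (l + 1),
    ((k + 1 : ℝ) ^ (k + n - 1) / (Nat.factorial (k + 1) : ℝ)) *
      ∑ m ∈ Finset.range (l - k + 1),
        (1 / (Nat.factorial m : ℝ)) *
          ∑ f ∈ posTuples m (l - k), ∏ j, Cnki n k (f j)

theorem abs_Cnki_le {n k i : ℕ} (hn : 1 ≤ n) (hi : 1 ≤ i) (hk : k ≤ n) :
    |Cnki n k i| ≤ (11 * (n : ℝ) ^ 2) ^ i := by
  have hn' : (1 : ℝ) ≤ n := by exact_mod_cast hn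
  have hi' : (1 : ℝ) ≤ i := by exact_mod_cast hi
  have hk' : (k : ℝ) ≤ n := by exact_mod_cast hk
  have hk0 : (0 : ℝ) ≤ k := by positivity
  have hsq : (n : ℝ) ≤ (n : ℝ) ^ 2 := by nlinarith
  have h1 : |((-1 : ℝ) ^ i * (2 * (k : ℝ) * i + n * i + k + n - 1) + (k : ℝ) - i)
      / (i * (i + 1))| ≤ 7 * (n : ℝ) ^ 2 := by
    rw [abs_div, abs_of_pos (by positivity : (0 : ℝ) < i * (i + 1)),
      div_le_iff₀ (by positivity)]
    have e1 : |(-1 : ℝ) ^ i * (2 * (k : ℝ) * i + n * i + k + n - 1)|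
        = 2 * (k : ℝ) * i + n * i + k + n - 1 := by
      rw [abs_mul, abs_pow, abs_neg, abs_one, one_pow, one_mul, abs_of_nonneg]
      have : 0 ≤ 2 * (k : ℝ) * i := by positivity
      have : 0 ≤ (n : ℝ) * i := by positivity
      linarith
    have e2 : |(-1 : ℝ) ^ i * (2 * (k : ℝ) * i + n * i + k + n - 1) + (k : ℝ) - i|
        ≤ (2 * (k : ℝ) * i + n * i + k + n - 1) + k + i := by
      have := abs_sub ((-1 : ℝ) ^ i * (2 * (k : ℝ) * i + n * i + k + n - 1) + (k : ℝ)) i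
      have := abs_add_le ((-1 : ℝ) ^ i * (2 * (k : ℝ) * i + n * i + k + n - 1)) (k : ℝ)
      rw [e1] at this
      rw [abs_of_nonneg hk0] at this
      have h3 : |(i : ℝ)| = i := abs_of_nonneg (by positivity)
      linarith
    refine e2.trans ?_
    have a1 : (k : ℝ) * i ≤ n * i := by gcongr
    have a2 : (n : ℝ) ≤ n * i := le_mul_of_one_le_right (by positivity) hi'
    have a3 : (i : ℝ) ≤ n * i := le_mul_of_one_le_left (by positivity) hn'
    have a4 : (n : ℝ) * i ≤ (n : ℝ) ^ 2 * i := by gcongr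
    have a5 : (n : ℝ) ^ 2 * i * 2 ≤ (n : ℝ) ^ 2 * i * (i + 1) := by gcongr; linarith
    nlinarith
  have h2 : |(1 / ((i : ℝ) * (k + 1) ^ i)) * ∑ j ∈ Finset.range (k + n - 1), (j : ℝ) ^ i|
      ≤ (4 * (n : ℝ) ^ 2) ^ i := by
    have hs0 : 0 ≤ ∑ j ∈ Finset.range (k + n - 1), (j : ℝ) ^ i :=
      Finset.sum_nonneg fun j _ => by positivity
    have hs : ∑ j ∈ Finset.range (k + n - 1), (j : ℝ) ^ i ≤ (2 * n : ℝ) * (2 * n : ℝ) ^ i := by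
      calc ∑ j ∈ Finset.range (k + n - 1), (j : ℝ) ^ i
          ≤ ∑ j ∈ Finset.range (k + n - 1), (2 * n : ℝ) ^ i := by
            refine Finset.sum_le_sum fun j hj => ?_
            have hj := Finset.mem_range.1 hj
            have : (j : ℝ) ≤ 2 * n := by
              have : j ≤ 2 * n := by omega
              exact_mod_cast this
            gcongr
        _ = ((k + n - 1 : ℕ) : ℝ) * (2 * n : ℝ) ^ i := by simp
        _ ≤ _ := by
            have : ((k + n - 1 : ℕ) : ℝ) ≤ 2 * n := by
              have : k + n - 1 ≤ 2 * n := by omega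
              exact_mod_cast this
            gcongr
    have hw : (1 / ((i : ℝ) * (k + 1) ^ i)) ≤ 1 := by
      rw [div_le_one (by positivity)]
      exact one_le_mul_of_one_le_of_one_le hi' (one_le_pow₀ (by linarith))
    rw [abs_of_nonneg (mul_nonneg (by positivity) hs0)]
    calc _ ≤ 1 * ∑ j ∈ Finset.range (k + n - 1), (j : ℝ) ^ i := by gcongr
      _ ≤ (2 * n : ℝ) * (2 * n : ℝ) ^ i := by rw [one_mul]; exact hs
      _ ≤ (2 * n : ℝ) ^ i * (2 * n : ℝ) ^ i := by
          gcongr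
          exact le_self_pow₀ (by linarith) (by omega)
      _ = _ := by rw [← mul_pow]; ring_nf
  have h3 : 7 * (n : ℝ) ^ 2 ≤ (7 * (n : ℝ) ^ 2) ^ i :=
    le_self_pow₀ (by nlinarith) (by omega)
  have h4 : (7 * (n : ℝ) ^ 2) ^ i + (4 * (n : ℝ) ^ 2) ^ i ≤ (11 * (n : ℝ) ^ 2) ^ i := by
    have := pow_add_pow_le (x := 7 * (n : ℝ) ^ 2) (y := 4 * (n : ℝ) ^ 2)
      (by positivity) (by positivity) (n := i) (by omega)
    refine this.trans (le_of_eq ?_)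
    ring_nf
  unfold Cnki
  refine (abs_sub _ _).trans ?_
  linarith

theorem abs_inner_le {n k r : ℕ} (hn : 33 ≤ n) (hk : k ≤ n) :
    |∑ m ∈ Finset.range (r + 1), (1 / (Nat.factorial m : ℝ)) *
      ∑ f ∈ posTuples m r, ∏ j, Cnki n k (f j)| ≤ ((n : ℝ) ^ 3) ^ r := by
  have hn' : (33 : ℝ) ≤ n := by exact_mod_cast hn
  set D : ℝ := 11 * (n : ℝ) ^ 2 with hD
  have hD0 : 0 ≤ D := by positivity
  have hm : ∀ m : ℕ, |∑ f ∈ posTuples m r, ∏ j, Cnki n k (f j)| ≤ (r : ℝ) ^ m * D ^ r := by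
    intro m
    have hcard : ((posTuples m r).card : ℝ) ≤ (r : ℝ) ^ m := by
      have : (posTuples m r).card ≤ r ^ m := by
        refine (Finset.card_filter_le _ _).trans (le_of_eq ?_)
        simp
      exact_mod_cast this
    calc |∑ f ∈ posTuples m r, ∏ j, Cnki n k (f j)|
        ≤ ∑ f ∈ posTuples m r, |∏ j, Cnki n k (f j)| := Finset.abs_sum_le_sum_abs _ _
      _ ≤ ∑ f ∈ posTuples m r, D ^ r := by
          refine Finset.sum_le_sum fun f hf => ?_
          obtain ⟨hf1, hf2⟩ := Finset.mem_filter.1 hf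
          rw [Fintype.mem_piFinset] at hf1
          rw [Finset.abs_prod, ← hf2, ← Finset.prod_pow_eq_pow_sum]
          exact Finset.prod_le_prod (fun _ _ => abs_nonneg _)
            fun j _ => abs_Cnki_le (by omega) (Finset.mem_Icc.1 (hf1 j)).1 hk
      _ = ((posTuples m r).card : ℝ) * D ^ r := by simp
      _ ≤ _ := by gcongr
  calc _ ≤ ∑ m ∈ Finset.range (r + 1), |(1 / (Nat.factorial m : ℝ)) *
        ∑ f ∈ posTuples m r, ∏ j, Cnki n k (f j)| := Finset.abs_sum_le_sum_abs _ _
    _ ≤ ∑ m ∈ Finset.range (r + 1), ((r : ℝ) ^ m / (Nat.factorial m : ℝ)) * D ^ r := by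
        refine Finset.sum_le_sum fun m _ => ?_
        rw [abs_mul, abs_of_nonneg (by positivity : (0 : ℝ) ≤ 1 / (Nat.factorial m : ℝ))]
        calc _ ≤ (1 / (Nat.factorial m : ℝ)) * ((r : ℝ) ^ m * D ^ r) := by gcongr; exact hm m
          _ = _ := by ring
    _ = (∑ m ∈ Finset.range (r + 1), (r : ℝ) ^ m / (Nat.factorial m : ℝ)) * D ^ r := by
        rw [Finset.sum_mul]
    _ ≤ Real.exp r * D ^ r := by
        gcongr
        exact Real.sum_le_exp_of_nonneg (by positivity) _
    _ = (Real.exp 1 * D) ^ r := by rw [mul_pow (Real.exp 1), ← Real.exp_nat_mul, mul_one]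
    _ ≤ _ := by
        have he : Real.exp 1 ≤ 3 := by linarith [Real.exp_one_lt_d9]
        have : Real.exp 1 * D ≤ (n : ℝ) ^ 3 := by
          calc Real.exp 1 * D ≤ 3 * D := by gcongr
            _ = 33 * (n : ℝ) ^ 2 := by rw [hD]; ring
            _ ≤ n * (n : ℝ) ^ 2 := by gcongr
            _ = _ := by ring
        gcongr

theorem leading_le {n k l : ℕ} (hn : 1 ≤ n) (hkl : k ≤ l) :
    (k + 1 : ℝ) ^ (k + n - 1) / (Nat.factorial (k + 1) : ℝ) ≤
      (l + 1 : ℝ) ^ (l + n - 1) / (Nat.factorial (l + 1) : ℝ) *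
        Real.exp (-((n : ℝ) - 1) / ((l : ℝ) + 1)) ^ (l - k) := by
  obtain ⟨p, rfl⟩ : ∃ p, n = p + 1 := ⟨n - 1, by omega⟩
  obtain ⟨r, rfl⟩ : ∃ r, l = k + r := ⟨l - k, by omega⟩
  have e1 : k + (p + 1) - 1 = k + p := by omega
  have e2 : k + r + (p + 1) - 1 = k + r + p := by omega
  have e3 : k + r - k = r := by omega
  rw [e1, e2, e3]
  push_cast
  set L : ℝ := (k : ℝ) + r + 1 with hL
  have hL0 : 0 < L := by positivity
  have hkL : (k : ℝ) + 1 ≤ L := by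
    have : (0 : ℝ) ≤ r := by positivity
    rw [hL]; linarith
  have hfac : (Nat.factorial (k + r + 1) : ℝ) ≤ (Nat.factorial (k + 1) : ℝ) * L ^ r := by
    have h1 := Nat.factorial_mul_ascFactorial (k + 1) r
    have h2 := Nat.ascFactorial_le_pow_add (k + 1) r
    have h3 : Nat.factorial (k + r + 1) ≤ Nat.factorial (k + 1) * (k + r + 1) ^ r := by
      have e : k + r + 1 = k + 1 + r := by omega
      rw [e, ← h1]
      exact Nat.mul_le_mul_left _ h2
    rw [hL]; exact_mod_cast h3
  have hA : ((k : ℝ) + 1) ^ k / (Nat.factorial (k + 1) : ℝ)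
      ≤ L ^ (k + r) / (Nat.factorial (k + r + 1) : ℝ) := by
    rw [div_le_div_iff₀ (by positivity) (by positivity)]
    calc ((k : ℝ) + 1) ^ k * (Nat.factorial (k + r + 1) : ℝ)
        ≤ L ^ k * ((Nat.factorial (k + 1) : ℝ) * L ^ r) := by gcongr
      _ = _ := by ring
  have hB : ((k : ℝ) + 1) ^ p ≤ L ^ p * Real.exp (-((p : ℝ) + 1 - 1) / L) ^ r := by
    have h1 : (k : ℝ) + 1 ≤ L * Real.exp (-(r : ℝ) / L) := by
      have h2 := Real.add_one_le_exp (-(r : ℝ) / L)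
      have h3 : L * (-(r : ℝ) / L + 1) = (k : ℝ) + 1 := by
        field_simp
        rw [hL]; ring
      rw [← h3]
      gcongr
    calc ((k : ℝ) + 1) ^ p ≤ (L * Real.exp (-(r : ℝ) / L)) ^ p := by gcongr
      _ = _ := by
        rw [mul_pow, ← Real.exp_nat_mul, ← Real.exp_nat_mul]
        congr 2
        ring
  calc ((k : ℝ) + 1) ^ (k + p) / (Nat.factorial (k + 1) : ℝ)
      = ((k : ℝ) + 1) ^ k / (Nat.factorial (k + 1) : ℝ) * ((k : ℝ) + 1) ^ p := by ring
    _ ≤ L ^ (k + r) / (Nat.factorial (k + r + 1) : ℝ) *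
        (L ^ p * Real.exp (-((p : ℝ) + 1 - 1) / L) ^ r) := by gcongr
    _ = _ := by ring

/-- **Theorem (explicit error bound).** There are effectively computable constants
`c > 0` and `N > 0` such that for all integers `n > N` and `0 ≤ l ≤ n/(10 log n)`,
`|a(n,l) − (l+1)^{l+n−1}/(l+1)!| ≤ ((l+1)^{l+n−1}/(l+1)!)·exp(−n/(l+1) + 6.5 log n + c)`. -/
theorem stmt9 :
    ∃ c : ℝ, 0 < c ∧ ∃ N : ℕ, 0 < N ∧ ∀ n l : ℕ, N < n →
      (l : ℝ) ≤ (n : ℝ) / (10 * Real.log n) →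
      |a n l - (l + 1 : ℝ) ^ (l + n - 1) / (Nat.factorial (l + 1) : ℝ)| ≤
        ((l + 1 : ℝ) ^ (l + n - 1) / (Nat.factorial (l + 1) : ℝ)) *
          Real.exp (-(n : ℝ) / ((l : ℝ) + 1) + 6.5 * Real.log n + c) := by
  refine ⟨1, one_pos, 100, by norm_num, fun n l hn hl => ?_⟩
  have hn' : (100 : ℝ) < n := by exact_mod_cast hn
  have hn0 : (0 : ℝ) < n := by linarith
  have hlog1 : 1 ≤ Real.log n := by
    rw [Real.le_log_iff_exp_le hn0]
    linarith [Real.exp_one_lt_d9]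
  have hlog2 : Real.log n ≤ n / 10 + 8 := by
    have h1 := Real.log_le_sub_one_of_pos (by positivity : (0 : ℝ) < n / 10)
    have h2 := Real.log_le_sub_one_of_pos (by norm_num : (0 : ℝ) < 10)
    rw [Real.log_div hn0.ne' (by norm_num)] at h1
    linarith
  have hl1 : (l : ℝ) * Real.log n ≤ n / 10 := by
    rw [le_div_iff₀ (by positivity)] at hl
    linarith
  have hl0 : (0 : ℝ) ≤ l := by positivity
  have hln : (l : ℝ) ≤ n := by nlinarith
  have hln' : l ≤ n := by exact_mod_cast hln
  set T : ℝ := (l + 1 : ℝ) ^ (l + n - 1) / (Nat.factorial (l + 1) : ℝ) with hT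
  have hT0 : 0 ≤ T := by positivity
  set E : ℝ := Real.exp (-((n : ℝ) - 1) / ((l : ℝ) + 1)) with hE
  set q : ℝ := E * (n : ℝ) ^ 3 with hq
  have hq0 : 0 ≤ q := by positivity
  have hqexp : q = Real.exp (-((n : ℝ) - 1) / ((l : ℝ) + 1) + 3 * Real.log n) := by
    rw [Real.exp_add, hq, hE, mul_comm 3 (Real.log n), Real.exp_mul, Real.exp_log hn0]
    norm_cast
  have hq1 : q ≤ 1 := by
    rw [hqexp, Real.exp_le_one_iff]
    have : 3 * Real.log n ≤ ((n : ℝ) - 1) / ((l : ℝ) + 1) := by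
      rw [le_div_iff₀ (by positivity)]
      nlinarith
    rw [neg_div]
    linarith
  have ha : a n l - T = ∑ k ∈ Finset.range l,
      ((k + 1 : ℝ) ^ (k + n - 1) / (Nat.factorial (k + 1) : ℝ)) *
      ∑ m ∈ Finset.range (l - k + 1), (1 / (Nat.factorial m : ℝ)) *
          ∑ f ∈ posTuples m (l - k), ∏ j, Cnki n k (f j) := by
    unfold a
    rw [Finset.sum_range_succ]
    simp [posTuples, hT]
  have hterm : ∀ k ∈ Finset.range l,
      |((k + 1 : ℝ) ^ (k + n - 1) / (Nat.factorial (k + 1) : ℝ)) *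
      ∑ m ∈ Finset.range (l - k + 1), (1 / (Nat.factorial m : ℝ)) *
          ∑ f ∈ posTuples m (l - k), ∏ j, Cnki n k (f j)| ≤ T * q := by
    intro k hk
    have hk := Finset.mem_range.1 hk
    rw [abs_mul, abs_of_nonneg (by positivity :
      (0 : ℝ) ≤ (k + 1 : ℝ) ^ (k + n - 1) / (Nat.factorial (k + 1) : ℝ))]
    calc _ ≤ (T * E ^ (l - k)) * ((n : ℝ) ^ 3) ^ (l - k) :=
          mul_le_mul (leading_le (by omega) hk.le) (abs_inner_le (by omega) (by omega))
            (abs_nonneg _) (by positivity)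
      _ = T * q ^ (l - k) := by rw [hq, mul_pow]; ring
      _ ≤ T * q := by
          gcongr
          exact pow_le_of_le_one hq0 hq1 (by omega)
  rw [ha]
  calc _ ≤ ∑ k ∈ Finset.range l, T * q :=
        (Finset.abs_sum_le_sum_abs _ _).trans (Finset.sum_le_sum hterm)
    _ = T * (l * q) := by simp; ring
    _ ≤ T * (n * q) := by gcongr
    _ ≤ _ := by
        gcongr
        have : (n : ℝ) * q =
            Real.exp (Real.log n + (-((n : ℝ) - 1) / ((l : ℝ) + 1) + 3 * Real.log n)) := by
          rw [Real.exp_add, Real.exp_log hn0, hqexp]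
        rw [this, Real.exp_le_exp]
        have h1 : -((n : ℝ) - 1) / ((l : ℝ) + 1)
            = -(n : ℝ) / ((l : ℝ) + 1) + 1 / ((l : ℝ) + 1) := by ring
        have h2 : 1 / ((l : ℝ) + 1) ≤ 1 := by
          rw [div_le_one (by positivity)]; linarith
        rw [h1]
        linarith
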